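/- A polynomial-like map g : U → V of degree d ≥ 2 has connected filled Julia set K(g) if K(g) contains all critical points of g. -/

import Mathlib

/-- The filled Julia set of a polynomial-like map `g : U → V`. -/
def polyLikeFilledJulia (g : ℂ → ℂ) (U : Set ℂ) : Set ℂ :=
  {z : ℂ | ∀ m : ℕ, g^[m] z ∈ U}

/-! Write `X n` for the set of points whose first `n` iterates stay in `U`, so that `g^[n + 1]`
is a finite branched cover `X n → V`. If `B` is compact with `U ∩ g⁻¹(U) ⊆ B ⊆ U`, then `K(g)` is
the decreasing intersection of the compact sets `(g^[n + 1])⁻¹(B)`, and it suffices that these are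
connected.

The set `B` is taken to be a closed ball in a chart `V ≃ₜ ℂ`. Such a chart exists because `U` and
`V` are planes by the Riemann mapping theorem: composing a chart of `V` with a homeomorphism that
squeezes a compact subset of `U` along the rays of a chart of `U` moves that subset into a small
round ball. Since the critical points of `g` lie in `K(g)`, the critical values of all iterates lie
in the interior of `B`. Hence `g^[n + 1]` is a covering over the rest of `V`, and the radial
retraction of `V` onto `B` lifts to a retraction of `X n` onto `(g^[n + 1])⁻¹(B)`, which is
therefore connected if `X n` is. Finally `X (n + 1) = (g^[n + 1])⁻¹(U)` is connected as well: each
of its clopen parts maps onto `U`, hence meets `(g^[n + 1])⁻¹(B)`. -/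

open Complex ComplexConjugate Filter Function Metric Set Topology

section SquareRoots

lemma hasDerivAt_of_hasDerivAt_sq {𝕜 : Type*} [NontriviallyNormedField 𝕜] [NeZero (2 : 𝕜)]
    {s : 𝕜 → 𝕜} {g' z : 𝕜} (hs : ContinuousAt s z) (hz : s z ≠ 0)
    (hg : HasDerivAt (fun w ↦ s w ^ 2) g' z) : HasDerivAt s (g' / (2 * s z)) z := by
  rw [hasDerivAt_iff_tendsto_slope] at hg ⊢
  have h_add : Tendsto (fun w ↦ s w + s z) (𝓝[≠] z) (𝓝 (2 * s z)) := by
    simpa only [two_mul] using (hs.tendsto.mono_left nhdsWithin_le_nhds).add_const (s z)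
  have h_ne : 2 * s z ≠ 0 := mul_ne_zero two_ne_zero hz
  refine (hg.div h_add h_ne).congr' ?_
  filter_upwards [h_add.eventually_ne h_ne] with w hw
  simp only [Pi.div_apply, slope_def_field, sq_sub_sq]
  field_simp

lemma exists_differentiableOn_sq_eq {U : Set ℂ} (hUo : IsOpen U) (hU : IsSimplyConnected U)
    {g : ℂ → ℂ} (hg : DifferentiableOn ℂ g U) (h0 : ∀ z ∈ U, g z ≠ 0) :
    ∃ s : ℂ → ℂ, DifferentiableOn ℂ s U ∧ ∀ z, s z ^ 2 = g z := by
  obtain ⟨s, hs, hsq⟩ := exists_continuousOn_pow_eq hU hUo hg.continuousOn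
    (by rintro ⟨z, hz, hgz⟩; exact h0 z hz hgz) two_ne_zero
  refine ⟨s, fun z hz ↦ ?_, hsq⟩
  have hsz : s z ≠ 0 := fun h ↦ h0 z hz (by simp [← hsq, h])
  have hgz := (hg.differentiableAt (hUo.mem_nhds hz)).hasDerivAt
  rw [← funext hsq] at hgz
  exact (hasDerivAt_of_hasDerivAt_sq (hs.continuousAt (hUo.mem_nhds hz)) hsz
    hgz).differentiableAt.differentiableWithinAt

lemma deriv_ne_zero_of_sq_eq_sub {s : ℂ → ℂ} {a p : ℂ} (hs : DifferentiableAt ℂ s p)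
    (hsq : ∀ z, s z ^ 2 = z - a) : deriv s p ≠ 0 := by
  intro h
  have hd := hs.hasDerivAt.fun_pow 2
  simp only [hsq, h, mul_zero] at hd
  exact one_ne_zero (((hasDerivAt_id' p).sub_const a).unique hd)

end SquareRoots

section Blaschke

/-- The Blaschke factor `z ↦ (z - a) / (1 - conj a * z)`: the automorphism of the unit disc that
moves `a` to the centre. -/
noncomputable def blaschke (a z : ℂ) : ℂ := (z - a) / (1 - conj a * z)

variable {a z : ℂ}

@[simp]
lemma blaschke_self (a : ℂ) : blaschke a a = 0 := by simp [blaschke]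

lemma one_sub_conj_mul_ne_zero (ha : ‖a‖ < 1) (hz : ‖z‖ < 1) : 1 - conj a * z ≠ 0 := by
  intro h
  have : ‖a‖ * ‖z‖ = 1 := by
    rw [← norm_conj a, ← norm_mul, ← sub_eq_zero.1 h, norm_one]
  nlinarith [norm_nonneg a, norm_nonneg z]

lemma sq_norm_one_sub_conj_mul_sub (a z : ℂ) :
    ‖1 - conj a * z‖ ^ 2 - ‖z - a‖ ^ 2 = (1 - ‖a‖ ^ 2) * (1 - ‖z‖ ^ 2) := by
  simp only [← normSq_eq_norm_sq, normSq_apply, sub_re, sub_im, mul_re, mul_im, conj_re, conj_im,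
    one_re, one_im]
  ring

lemma one_sub_sq_norm_blaschke (ha : ‖a‖ < 1) (hz : ‖z‖ < 1) :
    1 - ‖blaschke a z‖ ^ 2 = (1 - ‖a‖ ^ 2) * (1 - ‖z‖ ^ 2) / ‖1 - conj a * z‖ ^ 2 := by
  have := norm_ne_zero_iff.2 (one_sub_conj_mul_ne_zero ha hz)
  rw [blaschke, norm_div, ← sq_norm_one_sub_conj_mul_sub, div_pow, one_sub_div (pow_ne_zero 2 this)]

lemma one_sub_sq_norm_pos (hz : ‖z‖ < 1) : 0 < 1 - ‖z‖ ^ 2 := by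
  nlinarith [norm_nonneg z]

lemma blaschke_ne_zero (ha : ‖a‖ < 1) (hz : ‖z‖ < 1) (hza : z ≠ a) : blaschke a z ≠ 0 :=
  div_ne_zero (sub_ne_zero.2 hza) (one_sub_conj_mul_ne_zero ha hz)

lemma norm_blaschke_lt_one (ha : ‖a‖ < 1) (hz : ‖z‖ < 1) : ‖blaschke a z‖ < 1 := by
  have h : 0 < 1 - ‖blaschke a z‖ ^ 2 := by
    rw [one_sub_sq_norm_blaschke ha hz]
    have := one_sub_conj_mul_ne_zero ha hz
    have := one_sub_sq_norm_pos ha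
    have := one_sub_sq_norm_pos hz
    positivity
  exact (sq_lt_one_iff₀ (norm_nonneg _)).1 (sub_pos.1 h)

lemma hasDerivAt_blaschke (ha : ‖a‖ < 1) (hz : ‖z‖ < 1) :
    HasDerivAt (blaschke a) ((1 - ‖a‖ ^ 2) / (1 - conj a * z) ^ 2) z := by
  refine (((hasDerivAt_id' z).sub_const a).fun_div
    (((hasDerivAt_id' z).const_mul (conj a)).const_sub 1)
    (one_sub_conj_mul_ne_zero ha hz)).congr_deriv ?_
  rw [← conj_mul']
  ring

lemma blaschke_neg_blaschke (ha : ‖a‖ < 1) (hz : ‖z‖ < 1) :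
    blaschke (-a) (blaschke a z) = z := by
  have h := one_sub_conj_mul_ne_zero ha hz
  have hnum : (z - a) / (1 - conj a * z) - -a = z * (1 - conj a * a) / (1 - conj a * z) := by
    rw [sub_neg_eq_add, div_add' _ _ _ h]
    ring
  have hden : 1 - conj (-a) * ((z - a) / (1 - conj a * z)) =
      (1 - conj a * a) / (1 - conj a * z) := by
    rw [map_neg]
    field_simp
    ring
  rw [blaschke, blaschke, hnum, hden, div_div_div_cancel_right₀ h,
    mul_div_cancel_right₀ _ (one_sub_conj_mul_ne_zero ha ha)]

lemma injOn_blaschke (ha : ‖a‖ < 1) : InjOn (blaschke a) (ball 0 1) :=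
  LeftInvOn.injOn fun _ hz ↦ blaschke_neg_blaschke ha (mem_ball_zero_iff.1 hz)

end Blaschke

section HyperbolicDeriv

/-- The hyperbolic derivative of a map into the unit disc, i.e. its derivative measured in the
Poincaré metric of the disc (up to a factor `2`) at the target point. -/
noncomputable def hyperbolicDeriv (f : ℂ → ℂ) (p : ℂ) : ℝ := ‖deriv f p‖ / (1 - ‖f p‖ ^ 2)

variable {a p : ℂ} {f s : ℂ → ℂ}

lemma norm_deriv_le_hyperbolicDeriv (hp : ‖f p‖ < 1) : ‖deriv f p‖ ≤ hyperbolicDeriv f p :=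
  le_div_self (norm_nonneg _) (one_sub_sq_norm_pos hp) (by simp)

lemma hyperbolicDeriv_blaschke_comp (ha : ‖a‖ < 1) (hp : ‖f p‖ < 1)
    (hf : DifferentiableAt ℂ f p) :
    hyperbolicDeriv (blaschke a ∘ f) p = hyperbolicDeriv f p := by
  have hden : ‖1 - conj a * f p‖ ≠ 0 := norm_ne_zero_iff.2 (one_sub_conj_mul_ne_zero ha hp)
  have ha' := one_sub_sq_norm_pos ha
  have hp' := (one_sub_sq_norm_pos hp).ne'
  have hnum : ‖((1 : ℂ) - ‖a‖ ^ 2)‖ = 1 - ‖a‖ ^ 2 := by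
    rw [← Real.norm_of_nonneg ha'.le, ← norm_real]; push_cast; rfl
  rw [hyperbolicDeriv, ((hasDerivAt_blaschke ha hp).comp p hf.hasDerivAt).deriv, norm_mul,
    norm_div, norm_pow, hnum, comp_apply, one_sub_sq_norm_blaschke ha hp, hyperbolicDeriv]
  have ha'' := ha'.ne'
  field_simp

lemma norm_deriv_blaschke_comp (hp : ‖f p‖ < 1) (hf : DifferentiableAt ℂ f p) :
    ‖deriv (blaschke (f p) ∘ f) p‖ = hyperbolicDeriv f p := by
  rw [← hyperbolicDeriv_blaschke_comp hp hp hf]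
  simp [hyperbolicDeriv]

lemma hyperbolicDeriv_sq_lt (hs : DifferentiableAt ℂ s p) (hp : ‖s p‖ < 1)
    (hs' : deriv s p ≠ 0) : hyperbolicDeriv (fun z ↦ s z ^ 2) p < hyperbolicDeriv s p := by
  have hd : deriv (fun z ↦ s z ^ 2) p = 2 * s p * deriv s p := by
    simpa using (hs.hasDerivAt.fun_pow 2).deriv
  have hpos := one_sub_sq_norm_pos hp
  have hd0 := norm_pos_iff.2 hs'
  have hfactor : hyperbolicDeriv (fun z ↦ s z ^ 2) p =
      hyperbolicDeriv s p * (2 * ‖s p‖ / (1 + ‖s p‖ ^ 2)) := by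
    have hsplit : 1 - (‖s p‖ ^ 2) ^ 2 = (1 - ‖s p‖ ^ 2) * (1 + ‖s p‖ ^ 2) := by ring
    simp only [hyperbolicDeriv, hd, norm_mul, norm_pow, norm_ofNat, hsplit, div_mul_div_comm]
    ring
  rw [hfactor]
  refine mul_lt_of_lt_one_right (div_pos hd0 hpos) ((div_lt_one (by positivity)).2 ?_)
  nlinarith [sq_pos_of_pos (sub_pos.2 hp)]

end HyperbolicDeriv

section LocallyUniformLimits

lemma tendstoLocallyUniformlyOn_of_equicontinuousOn {ι X α : Type*} [TopologicalSpace X]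
    [LocallyCompactSpace X] [UniformSpace α] {U : Set X} {F : ι → X → α} {f : X → α} {l : Filter ι}
    (hUo : IsOpen U) (hF : EquicontinuousOn F U) (hf : ∀ x ∈ U, Tendsto (F · x) l (𝓝 (f x))) :
    TendstoLocallyUniformlyOn F f l U := by
  refine (tendstoLocallyUniformlyOn_iff_forall_isCompact hUo).2 fun K hKU hK ↦ ?_
  have h_pi : Tendsto ((⋃₀ {K}).domRestrict ∘ F) l (𝓝 ((⋃₀ {K}).domRestrict f)) := by
    rw [tendsto_pi_nhds, sUnion_singleton]
    exact fun x ↦ hf x (hKU x.2)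
  exact UniformOnFun.tendsto_iff_tendstoUniformlyOn.1
    ((EquicontinuousOn.tendsto_uniformOnFun_iff_pi' (by simpa) (by simpa using hF.mono hKU) l f).2
      h_pi) K rfl

variable {ι E : Type*} [NormedAddCommGroup E] [NormedSpace ℂ E] {U : Set ℂ}

lemma equicontinuousOn_of_norm_le {F : ι → ℂ → E} {C : ℝ} (hUo : IsOpen U)
    (hF : ∀ i, DifferentiableOn ℂ (F i) U) (hC : ∀ i, ∀ z ∈ U, ‖F i z‖ ≤ C) :
    EquicontinuousOn F U := by
  intro z hz
  obtain ⟨R, hR, hRU⟩ := Metric.isOpen_iff.1 hUo z hz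
  refine (Metric.equicontinuousAt_of_continuity_modulus (fun w ↦ 2 * C / R * dist w z)
    (Continuous.tendsto' (by fun_prop) _ _ (by simp)) F ?_).equicontinuousWithinAt U
  filter_upwards [ball_mem_nhds z hR] with w hw i
  rw [dist_comm]
  refine dist_le_div_mul_dist_of_mapsTo_ball ((hF i).mono hRU) (fun y hy ↦ ?_) hw
  rw [mem_closedBall, dist_eq_norm]
  linarith [norm_sub_le (F i y) (F i z), hC i y (hRU hy), hC i z hz]

-- Along an ultrafilter, pointwise limits exist by compactness alone, so that no diagonal
-- extraction is needed in Montel's theorem.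
lemma exists_tendstoLocallyUniformlyOn_of_norm_le [ProperSpace E] {F : ι → ℂ → E} {C : ℝ}
    (hUo : IsOpen U) (hF : ∀ i, DifferentiableOn ℂ (F i) U) (hC : ∀ i, ∀ z ∈ U, ‖F i z‖ ≤ C)
    (l : Ultrafilter ι) : ∃ f : ℂ → E, TendstoLocallyUniformlyOn F f l U := by
  have hlim (z : ℂ) (hz : z ∈ U) : ∃ w, Tendsto (F · z) l (𝓝 w) := by
    obtain ⟨w, -, hw⟩ := (isCompact_closedBall (0 : E) C).ultrafilter_le_nhds (l.map (F · z))
      (tendsto_principal.2 (Eventually.of_forall fun i ↦ mem_closedBall_zero_iff.2 (hC i z hz)))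
    exact ⟨w, hw⟩
  choose! f hf using hlim
  exact ⟨f, tendstoLocallyUniformlyOn_of_equicontinuousOn hUo
    (equicontinuousOn_of_norm_le hUo hF hC) hf⟩

end LocallyUniformLimits

section Hurwitz

lemma eventually_nhdsNE_ne_of_deriv_ne_zero {U : Set ℂ} {f : ℂ → ℂ} {p a : ℂ} (hUo : IsOpen U)
    (hU : IsPreconnected U) (hf : DifferentiableOn ℂ f U) (hp : p ∈ U) (hfp : deriv f p ≠ 0)
    (ha : a ∈ U) : ∀ᶠ z in 𝓝[≠] a, f z ≠ f a := by
  have han := hf.analyticOnNhd hUo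
  refine ((han a ha).eventually_eq_or_eventually_ne analyticAt_const).resolve_left fun h ↦ hfp ?_
  have hconst := han.eqOn_of_preconnected_of_eventuallyEq analyticOnNhd_const hU ha h
  rw [(hconst.eventuallyEq_of_mem (hUo.mem_nhds hp)).deriv_eq, deriv_const]

lemma isOpenMap_domRestrict_of_eventually_ne {U : Set ℂ} {f : ℂ → ℂ} (hUo : IsOpen U)
    (hf : DifferentiableOn ℂ f U) (hne : ∀ a ∈ U, ∀ᶠ z in 𝓝[≠] a, f z ≠ f a) :
    IsOpenMap (U.domRestrict f) := by
  refine IsOpenMap.of_nhds_le fun a ↦ ?_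
  have hle := ((hf.analyticOnNhd hUo a a.2).eventually_constant_or_nhds_le_map_nhds).resolve_left
    fun h ↦ ((hne a a.2).and (h.filter_mono nhdsWithin_le_nhds)).exists.elim fun _ hz ↦ hz.1 hz.2
  rwa [domRestrict_eq, ← Filter.map_map, map_nhds_subtype_coe_eq_nhds a.2 (hUo.mem_nhds a.2)]

lemma mem_image_closedBall_of_dist_lt {f g : ℂ → ℂ} {a : ℂ} {r ε : ℝ} (hr : 0 < r)
    (hg : DifferentiableOn ℂ g (closedBall a r)) (hf : ∀ z ∈ sphere a r, ε ≤ dist (f z) (f a))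
    (hfg : ∀ z ∈ closedBall a r, dist (f z) (g z) < ε / 4) : f a ∈ g '' closedBall a r := by
  have hfg_a := hfg a (mem_closedBall_self hr.le)
  have hε : 0 < ε := by linarith [dist_nonneg (x := f a) (y := g a)]
  have hsphere : ∀ z ∈ sphere a r, ε / 2 ≤ ‖g z - g a‖ := fun z hz ↦ by
    rw [← dist_eq_norm]
    linarith [dist_triangle4_right (f z) (f a) (g z) (g a), hf z hz,
      hfg z (sphere_subset_closedBall hz)]
  have hg_ne : ∃ᶠ z in 𝓝 a, g z ≠ g a := fun h ↦ by
    have hgo := (hg.mono ball_subset_closedBall).analyticOnNhd isOpen_ball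
    have hball : EqOn g (fun _ ↦ g a) (ball a r) :=
      hgo.eqOn_of_preconnected_of_eventuallyEq analyticOnNhd_const
        (convex_ball a r).isPreconnected (mem_ball_self hr) (h.mono fun _ ↦ not_not.1)
    obtain ⟨z, hz⟩ := NormedSpace.sphere_nonempty (x := a) |>.2 hr.le
    have hgz : g z = g a := hball.of_subset_closure hg.continuousOn continuousOn_const
      ball_subset_closedBall (closure_ball a hr.ne').ge (sphere_subset_closedBall hz)
    have := hsphere z hz
    rw [hgz, sub_self, norm_zero] at this
    linarith
  refine DiffContOnCl.ball_subset_image_closedBall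
    (DifferentiableOn.diffContOnCl (by rwa [closure_ball a hr.ne'])) hr hsphere hg_ne ?_
  rw [mem_ball]
  linarith

lemma eventually_mem_image_closedBall {ι : Type*} {l : Filter ι} [l.NeBot] {U : Set ℂ}
    {F : ι → ℂ → ℂ} {f : ℂ → ℂ} {a : ℂ} {r : ℝ} (hUo : IsOpen U)
    (hF : ∀ i, DifferentiableOn ℂ (F i) U) (hf : TendstoLocallyUniformlyOn F f l U) (ha : a ∈ U)
    (hne : ∀ᶠ z in 𝓝[≠] a, f z ≠ f a) (hr : 0 < r) :
    ∀ᶠ i in l, f a ∈ F i '' (U ∩ closedBall a r) := by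
  have hnhds : {z | z ∈ U ∧ (z ≠ a → f z ≠ f a)} ∈ 𝓝 a :=
    inter_mem (hUo.mem_nhds ha) (eventually_nhdsWithin_iff.1 hne)
  obtain ⟨R, hR, hRsub⟩ := nhds_basis_closedBall.mem_iff.1 hnhds
  set ρ := min r R
  have hρ : 0 < ρ := lt_min hr hR
  have hρU : closedBall a ρ ⊆ U := fun z hz ↦
    (hRsub (closedBall_subset_closedBall (min_le_right _ _) hz)).1
  have hfc : ContinuousOn f (sphere a ρ) :=
    (hf.continuousOn (Frequently.of_forall fun i ↦ (hF i).continuousOn)).mono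
      (sphere_subset_closedBall.trans hρU)
  obtain ⟨x, hx, hmin⟩ := (isCompact_sphere a ρ).exists_isMinOn (f := fun z ↦ dist (f z) (f a))
    (NormedSpace.sphere_nonempty.2 hρ.le) (by fun_prop)
  have hε : 0 < dist (f x) (f a) := dist_pos.2 <|
    (hRsub (closedBall_subset_closedBall (min_le_right _ _) (sphere_subset_closedBall hx))).2
      (ne_of_mem_sphere hx hρ.ne')
  have hunif := Metric.tendstoUniformlyOn_iff.1
    ((tendstoLocallyUniformlyOn_iff_forall_isCompact hUo).1 hf _ hρU (isCompact_closedBall a ρ))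
    _ (div_pos hε (four_pos (α := ℝ)))
  filter_upwards [hunif] with i hi
  obtain ⟨z, hz, hzf⟩ := mem_image_closedBall_of_dist_lt hρ ((hF i).mono hρU) hmin hi
  exact ⟨z, ⟨hρU hz, closedBall_subset_closedBall (min_le_left _ _) hz⟩, hzf⟩

lemma injOn_of_tendstoLocallyUniformlyOn {ι : Type*} {l : Filter ι} [l.NeBot] {U : Set ℂ}
    {F : ι → ℂ → ℂ} {f : ℂ → ℂ} (hUo : IsOpen U) (hF : ∀ i, DifferentiableOn ℂ (F i) U)
    (hinj : ∀ i, InjOn (F i) U) (hf : TendstoLocallyUniformlyOn F f l U)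
    (hne : ∀ a ∈ U, ∀ᶠ z in 𝓝[≠] a, f z ≠ f a) : InjOn f U := by
  intro a ha b hb hab
  by_contra h
  have hr : 0 < dist a b / 3 := by have := dist_pos.2 h; positivity
  obtain ⟨i, ⟨x, ⟨hxU, hxa⟩, hx⟩, y, ⟨hyU, hyb⟩, hy⟩ :=
    ((eventually_mem_image_closedBall hUo hF hf ha (hne a ha) hr).and
      (eventually_mem_image_closedBall hUo hF hf hb (hne b hb) hr)).exists
  obtain rfl : x = y := hinj i hxU hyU (by rw [hx, hy, hab])
  rw [mem_closedBall] at hxa hyb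
  linarith [dist_triangle_left a b x]

end Hurwitz

/-- An injective holomorphic map of `U` into the open unit disc. These maps form the extremal
family in the proof of the Riemann mapping theorem; they are not normalised to vanish at a base
point, since the hyperbolic derivative is insensitive to the normalisation. -/
structure IsDiscEmbedding (f : ℂ → ℂ) (U : Set ℂ) : Prop where
  differentiableOn : DifferentiableOn ℂ f U
  mapsTo : MapsTo f U (ball 0 1)
  injOn : InjOn f U

namespace IsDiscEmbedding

variable {U : Set ℂ} {f s : ℂ → ℂ} {a p z : ℂ}

lemma norm_lt_one (hf : IsDiscEmbedding f U) (hz : z ∈ U) : ‖f z‖ < 1 :=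
  mem_ball_zero_iff.1 (hf.mapsTo hz)

lemma blaschke_comp (hf : IsDiscEmbedding f U) (ha : ‖a‖ < 1) :
    IsDiscEmbedding (blaschke a ∘ f) U where
  differentiableOn _ hz := (hasDerivAt_blaschke ha
    (hf.norm_lt_one hz)).differentiableAt.comp_differentiableWithinAt _ (hf.differentiableOn _ hz)
  mapsTo _ hz := mem_ball_zero_iff.2 (norm_blaschke_lt_one ha (hf.norm_lt_one hz))
  injOn := (injOn_blaschke ha).comp hf.injOn hf.mapsTo

lemma of_sq_eq (hf : IsDiscEmbedding f U) (hs : DifferentiableOn ℂ s U)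
    (hsq : ∀ z ∈ U, s z ^ 2 = f z) : IsDiscEmbedding s U where
  differentiableOn := hs
  mapsTo z hz := by
    rw [mem_ball_zero_iff, ← sq_lt_one_iff₀ (norm_nonneg _), ← norm_pow, hsq z hz]
    exact hf.norm_lt_one hz
  injOn z hz w hw h := hf.injOn hz hw (by rw [← hsq z hz, ← hsq w hw, h])

lemma of_tendstoLocallyUniformlyOn {ι : Type*} {l : Filter ι} [l.NeBot] {F : ι → ℂ → ℂ}
    (hUo : IsOpen U) (hF : ∀ i, IsDiscEmbedding (F i) U) (hf : TendstoLocallyUniformlyOn F f l U)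
    (hne : ∀ a ∈ U, ∀ᶠ z in 𝓝[≠] a, f z ≠ f a) : IsDiscEmbedding f U := by
  have hfd : DifferentiableOn ℂ f U :=
    hf.differentiableOn (Eventually.of_forall fun i ↦ (hF i).differentiableOn) hUo
  have hclosed : range (U.domRestrict f) ⊆ closedBall 0 1 := by
    rintro _ ⟨z, rfl⟩
    exact isClosed_closedBall.mem_of_tendsto (hf.tendsto_at z.2)
      (Eventually.of_forall fun i ↦ ball_subset_closedBall ((hF i).mapsTo z.2))
  have hopen := interior_maximal hclosed
    (isOpenMap_domRestrict_of_eventually_ne hUo hfd hne).isOpen_range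
  rw [interior_closedBall _ one_ne_zero] at hopen
  exact ⟨hfd, fun z hz ↦ hopen ⟨⟨z, hz⟩, rfl⟩,
    injOn_of_tendstoLocallyUniformlyOn hUo (fun i ↦ (hF i).differentiableOn)
      (fun i ↦ (hF i).injOn) hf hne⟩

lemma isOpenMap_domRestrict (hf : IsDiscEmbedding f U) (hUo : IsOpen U) :
    IsOpenMap (U.domRestrict f) := by
  refine isOpenMap_domRestrict_of_eventually_ne hUo hf.differentiableOn fun a ha ↦ ?_
  filter_upwards [self_mem_nhdsWithin, mem_nhdsWithin_of_mem_nhds (hUo.mem_nhds ha)] with z hza hz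
  exact fun h ↦ hza (hf.injOn hz ha h)

end IsDiscEmbedding

section RiemannMapping

variable {U : Set ℂ} {p : ℂ}

-- A branch `s` of `√(z - a)` never takes opposite values on `U`, so it omits a disc around `-s p`
-- because it covers one around `s p`.
lemma exists_sq_eq_sub_and_le_norm_add (hUo : IsOpen U) (hU : IsSimplyConnected U) {a : ℂ}
    (ha : a ∉ U) (hp : p ∈ U) :
    ∃ s : ℂ → ℂ, ∃ ε > 0, DifferentiableOn ℂ s U ∧ (∀ z, s z ^ 2 = z - a) ∧
      ∀ z ∈ U, ε ≤ ‖s z + s p‖ := by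
  have hne : ∀ z ∈ U, z - a ≠ 0 := fun z hz ↦ sub_ne_zero.2 (ne_of_mem_of_not_mem hz ha)
  obtain ⟨s, hs, hsq⟩ := exists_differentiableOn_sq_eq hUo hU (by fun_prop) hne
  have hs0 : ∀ z ∈ U, s z ≠ 0 := fun z hz h ↦ hne z hz (by rw [← hsq, h, zero_pow two_ne_zero])
  have hsp := hs.analyticAt (hUo.mem_nhds hp)
  have hnhds : s '' U ∈ 𝓝 (s p) := by
    rw [← hsp.hasStrictDerivAt.map_nhds_eq (deriv_ne_zero_of_sq_eq_sub hsp.differentiableAt hsq)]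
    exact image_mem_map (hUo.mem_nhds hp)
  obtain ⟨ε, hε, hball⟩ := Metric.mem_nhds_iff.1 hnhds
  refine ⟨s, ε, hε, hs, hsq, fun z hz ↦ not_lt.1 fun hlt ↦ ?_⟩
  obtain ⟨y, -, hy⟩ : -s z ∈ s '' U := hball (by rwa [mem_ball, dist_eq_norm, ← neg_add', norm_neg])
  have hyz : y = z := sub_left_injective (b := a) (by simp only [← hsq, hy, neg_sq])
  rw [hyz, self_eq_neg] at hy
  exact hs0 z hz hy

lemma exists_isDiscEmbedding_deriv_ne_zero (hUo : IsOpen U) (hU : IsSimplyConnected U)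
    (hne : U ≠ univ) (hp : p ∈ U) : ∃ f, IsDiscEmbedding f U ∧ deriv f p ≠ 0 := by
  obtain ⟨a, ha⟩ := (ne_univ_iff_exists_notMem U).1 hne
  obtain ⟨s, ε, hε, hs, hsq, hle⟩ := exists_sq_eq_sub_and_le_norm_add hUo hU ha hp
  have hne : ∀ z ∈ U, s z + s p ≠ 0 := fun z hz ↦ norm_pos_iff.1 (hε.trans_le (hle z hz))
  have hε' : (ε / 2 : ℂ) ≠ 0 := by simpa using hε.ne'
  have hd : ∀ z ∈ U, HasDerivAt (fun w ↦ (ε / 2) / (s w + s p))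
      (-(ε / 2 * deriv s z) / (s z + s p) ^ 2) z := fun z hz ↦ by
    simpa using (hasDerivAt_const z (ε / 2 : ℂ)).fun_div
      ((hs.differentiableAt (hUo.mem_nhds hz)).hasDerivAt.add_const (s p)) (hne z hz)
  have hs' := deriv_ne_zero_of_sq_eq_sub (hs.differentiableAt (hUo.mem_nhds hp)) hsq
  refine ⟨_, ⟨fun z hz ↦ (hd z hz).differentiableAt.differentiableWithinAt, fun z hz ↦ ?_,
    fun z _ w _ h ↦ ?_⟩, ?_⟩
  · rw [mem_ball_zero_iff, norm_div, div_lt_one (norm_pos_iff.2 (hne z hz))]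
    refine lt_of_lt_of_le ?_ (hle z hz)
    simpa [abs_of_pos hε] using hε
  · have hszw : s z + s p = s w + s p := by simpa [div_eq_mul_inv, hε.ne'] using h
    exact sub_left_injective (b := a) (by simp only [← hsq, add_right_cancel hszw])
  · rw [(hd p hp).deriv]
    exact div_ne_zero (neg_ne_zero.2 (mul_ne_zero hε' hs')) (pow_ne_zero 2 (hne p hp))

lemma IsDiscEmbedding.exists_forall_norm_deriv_le (hUo : IsOpen U) (hU : IsPreconnected U)
    (hp : p ∈ U) {f₀ : ℂ → ℂ} (hf₀ : IsDiscEmbedding f₀ U) (hf₀' : deriv f₀ p ≠ 0) :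
    ∃ f, IsDiscEmbedding f U ∧ deriv f p ≠ 0 ∧
      ∀ h, IsDiscEmbedding h U → ‖deriv h p‖ ≤ ‖deriv f p‖ := by
  set S : Set ℝ := (fun h : ℂ → ℂ ↦ ‖deriv h p‖) '' {h | IsDiscEmbedding h U}
  have hbdd : BddAbove S := by
    obtain ⟨R, hR, hRU⟩ := Metric.isOpen_iff.1 hUo p hp
    refine ⟨2 / R, forall_mem_image.2 fun h hh ↦
      norm_deriv_le_div_of_mapsTo_ball (hh.differentiableOn.mono hRU) (fun z hz ↦ ?_) hR⟩
    rw [mem_closedBall, dist_eq_norm]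
    linarith [norm_sub_le (h z) (h p), hh.norm_lt_one (hRU hz), hh.norm_lt_one hp]
  obtain ⟨u, -, hu, huS⟩ := exists_seq_tendsto_sSup (S := S) ⟨_, f₀, hf₀, rfl⟩ hbdd
  choose F hF hFu using huS
  obtain ⟨f, hf⟩ := exists_tendstoLocallyUniformlyOn_of_norm_le hUo
    (fun n ↦ (hF n).differentiableOn) (fun n z hz ↦ ((hF n).norm_lt_one hz).le) (hyperfilter ℕ)
  have hfd : ∀ᶠ n in hyperfilter ℕ, DifferentiableOn ℂ (F n) U :=
    Eventually.of_forall fun n ↦ (hF n).differentiableOn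
  have hsup : ‖deriv f p‖ = sSup S :=
    tendsto_nhds_unique ((hf.deriv hfd hUo).tendsto_at hp).norm
      ((hu.mono_left Nat.hyperfilter_le_atTop).congr fun n ↦ (hFu n).symm)
  have hmax : ∀ h, IsDiscEmbedding h U → ‖deriv h p‖ ≤ ‖deriv f p‖ := fun h hh ↦
    hsup ▸ le_csSup hbdd ⟨h, hh, rfl⟩
  have hf' : deriv f p ≠ 0 := norm_pos_iff.1 ((norm_pos_iff.2 hf₀').trans_le (hmax f₀ hf₀))
  exact ⟨f, .of_tendstoLocallyUniformlyOn hUo hF hf fun a ↦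
    eventually_nhdsNE_ne_of_deriv_ne_zero hUo hU (hf.differentiableOn hfd hUo) hp hf', hf', hmax⟩

lemma IsDiscEmbedding.hyperbolicDeriv_le (hUo : IsOpen U) (hp : p ∈ U) {f h : ℂ → ℂ}
    (hf : IsDiscEmbedding f U) (hmax : ∀ k, IsDiscEmbedding k U → ‖deriv k p‖ ≤ ‖deriv f p‖)
    (hh : IsDiscEmbedding h U) : hyperbolicDeriv h p ≤ hyperbolicDeriv f p :=
  calc hyperbolicDeriv h p = ‖deriv (blaschke (h p) ∘ h) p‖ :=
        (norm_deriv_blaschke_comp (hh.norm_lt_one hp)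
          (hh.differentiableOn.differentiableAt (hUo.mem_nhds hp))).symm
    _ ≤ ‖deriv f p‖ := hmax _ (hh.blaschke_comp (hh.norm_lt_one hp))
    _ ≤ hyperbolicDeriv f p := norm_deriv_le_hyperbolicDeriv (hf.norm_lt_one hp)

lemma IsDiscEmbedding.image_eq_ball (hUo : IsOpen U) (hU : IsSimplyConnected U) (hp : p ∈ U)
    {f : ℂ → ℂ} (hf : IsDiscEmbedding f U) (hf' : deriv f p ≠ 0)
    (hmax : ∀ h, IsDiscEmbedding h U → ‖deriv h p‖ ≤ ‖deriv f p‖) : f '' U = ball 0 1 := by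
  have hdiff {h : ℂ → ℂ} (hh : IsDiscEmbedding h U) : DifferentiableAt ℂ h p :=
    hh.differentiableOn.differentiableAt (hUo.mem_nhds hp)
  refine hf.mapsTo.image_subset.antisymm fun w hw ↦ by_contra fun hwf ↦ ?_
  rw [mem_ball_zero_iff] at hw
  have hh : IsDiscEmbedding (blaschke w ∘ f) U := hf.blaschke_comp hw
  obtain ⟨s, hs, hsq⟩ := exists_differentiableOn_sq_eq hUo hU hh.differentiableOn fun z hz ↦
    blaschke_ne_zero hw (hf.norm_lt_one hz) fun h ↦ hwf ⟨z, hz, h⟩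
  have hse : IsDiscEmbedding s U := hh.of_sq_eq hs fun z _ ↦ hsq z
  have hyp_eq : hyperbolicDeriv (fun z ↦ s z ^ 2) p = hyperbolicDeriv f p := by
    rw [funext hsq]
    exact hyperbolicDeriv_blaschke_comp hw (hf.norm_lt_one hp) (hdiff hf)
  have hs' : deriv s p ≠ 0 := by
    intro h0
    have hyp_pos : 0 < hyperbolicDeriv f p :=
      (norm_pos_iff.2 hf').trans_le (norm_deriv_le_hyperbolicDeriv (hf.norm_lt_one hp))
    rw [← hyp_eq, hyperbolicDeriv, ((hdiff hse).hasDerivAt.fun_pow 2).deriv] at hyp_pos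
    simp [h0] at hyp_pos
  have hyp_lt := hyperbolicDeriv_sq_lt (hdiff hse) (hse.norm_lt_one hp) hs'
  exact (hyp_eq ▸ hyp_lt).not_ge (hf.hyperbolicDeriv_le hUo hp hmax hse)

theorem exists_isDiscEmbedding_image_eq_ball (hUo : IsOpen U) (hU : IsSimplyConnected U)
    (hne : U ≠ univ) : ∃ f, IsDiscEmbedding f U ∧ f '' U = ball 0 1 := by
  obtain ⟨p, hp⟩ := hU.nonempty
  obtain ⟨f₀, hf₀, hf₀'⟩ := exists_isDiscEmbedding_deriv_ne_zero hUo hU hne hp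
  obtain ⟨f, hf, hf', hmax⟩ :=
    hf₀.exists_forall_norm_deriv_le hUo hU.isPathConnected.isConnected.isPreconnected hp hf₀'
  exact ⟨f, hf, hf.image_eq_ball hUo hU hp hf' hmax⟩

lemma nonempty_homeomorph_complex (hUo : IsOpen U) (hU : IsSimplyConnected U) :
    Nonempty (U ≃ₜ ℂ) := by
  rcases eq_or_ne U univ with rfl | hne
  · exact ⟨Homeomorph.Set.univ ℂ⟩
  obtain ⟨f, hf, himage⟩ := exists_isDiscEmbedding_image_eq_ball hUo hU hne
  have hemb : IsOpenEmbedding (U.domRestrict f) :=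
    .of_continuous_injective_isOpenMap hf.differentiableOn.continuousOn.domRestrict
      hf.injOn.injective (hf.isOpenMap_domRestrict hUo)
  have hrange : range (U.domRestrict f) = ball 0 1 := by rw [range_domRestrict, himage]
  exact ⟨hemb.isEmbedding.toHomeomorph.trans
    ((Homeomorph.setCongr hrange).trans Homeomorph.unitBall.symm)⟩

end RiemannMapping

section Squeezing

lemma continuous_extendDomain_of_eqOn_compl {E X : Type*} [TopologicalSpace E] [TopologicalSpace X]
    [T2Space X] {i : E → X} [DecidablePred (· ∈ range i)] (hi : IsOpenEmbedding i)
    {T : Equiv.Perm E} (hT : Continuous T) {C : Set E} (hC : IsCompact C) (hTC : EqOn T id Cᶜ) :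
    Continuous (T.extendDomain (Equiv.ofInjective i hi.injective)) := by
  have happly (x : E) : T.extendDomain (Equiv.ofInjective i hi.injective) (i x) = i (T x) :=
    T.extendDomain_apply_image (Equiv.ofInjective i hi.injective) x
  refine continuous_iff_continuousAt.2 fun y ↦ ?_
  by_cases hy : y ∈ i '' C
  · obtain ⟨x, -, rfl⟩ := hy
    rw [← hi.continuousAt_iff]
    simpa only [comp_def, happly] using (hi.continuous.comp hT).continuousAt
  · refine continuousAt_id.congr ?_
    filter_upwards [(hC.image hi.continuous).isClosed.isOpen_compl.mem_nhds hy] with w hw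
    by_cases hwi : w ∈ range i
    · obtain ⟨x, rfl⟩ := hwi
      have hx : x ∈ Cᶜ := fun h ↦ hw (mem_image_of_mem i h)
      simp only [happly, hTC hx, id]
    · exact (T.extendDomain_apply_not_subtype _ hwi).symm

lemma exists_homeomorph_extension {E X : Type*} [TopologicalSpace E] [TopologicalSpace X]
    [T2Space X] {i : E → X} (hi : IsOpenEmbedding i) (T : E ≃ₜ E) {C : Set E} (hC : IsCompact C)
    (hTC : EqOn T id Cᶜ) :
    ∃ F : X ≃ₜ X, (∀ x, F (i x) = i (T x)) ∧ ∀ y ∉ range i, F y = y := by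
  classical
  set ei := Equiv.ofInjective i hi.injective
  have hTC_symm : EqOn T.symm id Cᶜ := fun x hx ↦ T.symm_apply_eq.2 (hTC hx).symm
  let F : X ≃ₜ X :=
    { toEquiv := Equiv.Perm.extendDomain T.toEquiv ei
      continuous_toFun := continuous_extendDomain_of_eqOn_compl hi T.continuous hC hTC
      continuous_invFun :=
        continuous_extendDomain_of_eqOn_compl hi T.symm.continuous hC hTC_symm }
  exact ⟨F, fun x ↦ Equiv.Perm.extendDomain_apply_image T.toEquiv ei x,
    fun y hy ↦ Equiv.Perm.extendDomain_apply_not_subtype T.toEquiv ei hy⟩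

lemma exists_orderIso_squeeze {a c : ℝ} (ha : 0 < a) (hc : 0 < c) (hc1 : c ≤ 1) :
    ∃ ρ : ℝ ≃o ℝ, ρ 0 = 0 ∧ ρ a ≤ c * a ∧ ∀ r, 2 * a ≤ r → ρ r = r := by
  set f : ℝ → ℝ := fun r ↦ min r (max (c * r) (2 * (r - a)))
  have hmono : StrictMono f := fun x y h ↦
    min_lt_min h (max_lt_max (by gcongr) (by linarith))
  have hf_nonpos : ∀ r ≤ 0, f r = r := fun r hr ↦
    min_eq_left (le_max_of_le_left (by nlinarith))
  have hf_ge : ∀ r, 2 * a ≤ r → f r = r := fun r hr ↦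
    min_eq_left (le_max_of_le_right (by linarith))
  have hcont : Continuous f := by fun_prop
  have hsurj : Surjective f := hcont.surjective
    (tendsto_id.congr' ((eventually_ge_atTop (2 * a)).mono fun r hr ↦ (hf_ge r hr).symm))
    (tendsto_id.congr' ((eventually_le_atBot 0).mono fun r hr ↦ (hf_nonpos r hr).symm))
  refine ⟨hmono.orderIsoOfSurjective f hsurj, hf_nonpos 0 le_rfl, ?_, hf_ge⟩
  exact (min_le_right _ _).trans (max_le le_rfl (by rw [sub_self, mul_zero]; positivity))

variable {E : Type*} [NormedAddCommGroup E] [NormedSpace ℝ E]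

/-- The radial rescaling of a normed space that maps the sphere of radius `r` to the sphere of
radius `ρ r`. -/
noncomputable def radialMap (ρ : ℝ → ℝ) (x : E) : E := (ρ ‖x‖ / ‖x‖) • x

lemma radialMap_of_eq {ρ : ℝ → ℝ} {x : E} (h : ρ ‖x‖ = ‖x‖) : radialMap ρ x = x := by
  rcases eq_or_ne x 0 with rfl | hx
  · exact smul_zero _
  · rw [radialMap, h, div_self (norm_ne_zero_iff.2 hx), one_smul]

lemma norm_radialMap {ρ : ℝ ≃o ℝ} (h0 : ρ 0 = 0) (x : E) : ‖radialMap ρ x‖ = ρ ‖x‖ := by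
  have hρ : 0 ≤ ρ ‖x‖ := h0 ▸ ρ.monotone (norm_nonneg x)
  rcases eq_or_ne x 0 with rfl | hx
  · simp [radialMap, h0]
  · rw [radialMap, norm_smul, Real.norm_of_nonneg (by positivity),
      div_mul_cancel₀ _ (norm_ne_zero_iff.2 hx)]

lemma continuous_radialMap {ρ : ℝ ≃o ℝ} (h0 : ρ 0 = 0) : Continuous (radialMap ρ : E → E) := by
  refine continuous_iff_continuousAt.2 fun x ↦ ?_
  rcases eq_or_ne x 0 with rfl | hx
  · have h := (ρ.continuous.comp (continuous_norm (E := E))).tendsto 0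
    rw [comp_apply, norm_zero, h0] at h
    have hx0 : radialMap ρ (0 : E) = 0 := smul_zero _
    rw [ContinuousAt, hx0]
    exact tendsto_zero_iff_norm_tendsto_zero.2 (h.congr fun x ↦ (norm_radialMap h0 x).symm)
  · have := ρ.continuous
    unfold radialMap
    fun_prop (disch := simpa)

lemma radialMap_symm_radialMap {ρ : ℝ ≃o ℝ} (h0 : ρ 0 = 0) (x : E) :
    radialMap ρ.symm (radialMap ρ x) = x := by
  rcases eq_or_ne x 0 with rfl | hx
  · simp [radialMap]
  have hx' := norm_ne_zero_iff.2 hx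
  have hρ : ρ ‖x‖ ≠ 0 := fun h ↦ hx' (ρ.injective (h.trans h0.symm))
  rw [radialMap, norm_radialMap h0, ρ.symm_apply_apply, radialMap, smul_smul,
    div_mul_div_cancel₀ hρ, div_self hx', one_smul]

/-- The radial rescaling of a normed space by an order isomorphism of `ℝ` fixing `0`, as a
homeomorphism. -/
noncomputable def radialHomeomorph (ρ : ℝ ≃o ℝ) (h0 : ρ 0 = 0) : E ≃ₜ E where
  toFun := radialMap ρ
  invFun := radialMap ρ.symm
  left_inv := radialMap_symm_radialMap h0
  right_inv := radialMap_symm_radialMap (ρ := ρ.symm) (ρ.symm_apply_eq.2 h0.symm)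
  continuous_toFun := continuous_radialMap h0
  continuous_invFun := continuous_radialMap (ρ.symm_apply_eq.2 h0.symm)

lemma exists_homeomorph_image_subset_of_isOpenEmbedding [ProperSpace E] {X : Type*}
    [TopologicalSpace X] [T2Space X] {i : E → X} (hi : IsOpenEmbedding i) {K : Set E}
    (hK : IsCompact K) {N : Set X} (hN : N ∈ 𝓝 (i 0)) :
    ∃ F : X ≃ₜ X, F '' (i '' K) ⊆ N ∧ ∀ y, F y ∈ range i ↔ y ∈ range i := by
  obtain ⟨a, ha, hKa⟩ := hK.isBounded.subset_closedBall_lt 0 0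
  obtain ⟨ε, hε, hεN⟩ := nhds_basis_closedBall.mem_iff.1 (hi.continuous.continuousAt hN)
  obtain ⟨ρ, h0, hρa, hρ⟩ := exists_orderIso_squeeze (c := min 1 (ε / a)) ha (by positivity)
    (min_le_left _ _)
  obtain ⟨F, hF, hF'⟩ := exists_homeomorph_extension hi (radialHomeomorph ρ h0)
    (isCompact_closedBall (0 : E) (2 * a)) fun x hx ↦
      radialMap_of_eq (hρ _ (not_le.1 (mem_closedBall_zero_iff.not.1 hx)).le)
  refine ⟨F, ?_, fun y ↦ ?_⟩
  · rintro _ ⟨_, ⟨x, hx, rfl⟩, rfl⟩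
    rw [hF]
    refine hεN (mem_closedBall_zero_iff.2 ?_)
    calc ‖radialMap ρ x‖ = ρ ‖x‖ := norm_radialMap h0 x
      _ ≤ ρ a := ρ.monotone (mem_closedBall_zero_iff.1 (hKa hx))
      _ ≤ ε / a * a := hρa.trans (by gcongr; exact min_le_right _ _)
      _ = ε := div_mul_cancel₀ _ ha.ne'
  · have hrange (x : E) : F (i x) ∈ range i := hF x ▸ mem_range_self _
    refine ⟨fun hy ↦ by_contra fun hyi ↦ hyi (hF' y hyi ▸ hy), ?_⟩
    rintro ⟨x, rfl⟩
    exact hrange x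

lemma exists_homeomorph_closedBall_subset [ProperSpace E] {X : Type*} [TopologicalSpace X]
    {U V K : Set X} (hUo : IsOpen U) (hUV : U ⊆ V) (eU : U ≃ₜ E) (eV : V ≃ₜ E) (hK : IsCompact K)
    (hKU : K ⊆ U) :
    ∃ e : V ≃ₜ E, ∃ δ > 0, (∀ z : V, ↑z ∈ K → ‖e z‖ < δ) ∧ ∀ z : V, ‖e z‖ ≤ δ → ↑z ∈ U := by
  set i : E → E := eV ∘ inclusion hUV ∘ eU.symm
  have hincl : IsOpenEmbedding (inclusion hUV) :=
    ⟨.inclusion hUV, by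
      rw [range_inclusion]; exact hUo.preimage continuous_subtype_val⟩
  have hi : IsOpenEmbedding i :=
    eV.isOpenEmbedding.comp (hincl.comp eU.symm.isOpenEmbedding)
  have hrange (z : V) : eV z ∈ range i ↔ (z : X) ∈ U := by
    constructor
    · rintro ⟨x, hx⟩
      rw [← eV.injective hx]
      exact (eU.symm x).2
    · exact fun hz ↦ ⟨eU ⟨z, hz⟩, by simp [i, inclusion]⟩
  obtain ⟨δ, hδ, hδi⟩ := nhds_basis_closedBall.mem_iff.1 (hi.isOpen_range.mem_nhds ⟨0, rfl⟩)
  have hK' : IsCompact (eU '' ((↑) ⁻¹' K)) :=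
    ((IsInducing.subtypeVal.isCompact_preimage_iff (by simpa)).2 hK).image eU.continuous
  obtain ⟨F, hFK, hF⟩ :=
    exists_homeomorph_image_subset_of_isOpenEmbedding hi hK' (ball_mem_nhds (i 0) hδ)
  refine ⟨(eV.trans F).trans (Homeomorph.subRight (i 0)), δ, hδ, fun z hz ↦ ?_, fun z hz ↦ ?_⟩
  · refine mem_ball_iff_norm.1 (hFK (mem_image_of_mem F ?_))
    exact ⟨eU ⟨z, hKU hz⟩, mem_image_of_mem eU hz, by simp [i, inclusion]⟩
  · rw [← hrange, ← hF]
    exact hδi (mem_closedBall_iff_norm.2 hz)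

end Squeezing

section Connectedness

lemma exists_lift_of_deformation {E X : Type*} [TopologicalSpace E] [TopologicalSpace X]
    {p : E → X} (hp : IsCoveringMap p) (H : C(unitInterval × X, X)) (H0 : ∀ x, H (0, x) = x) :
    ∃ Γ : C(unitInterval × E, E), (∀ t e, p (Γ (t, e)) = H (t, p e)) ∧
      ∀ e, (∀ t, H (t, p e) = p e) → ∀ t, Γ (t, e) = e := by
  set Hp : C(unitInterval × E, X) :=
    H.comp ((ContinuousMap.id _).prodMap ⟨p, hp.continuous⟩)
  have hHp (e : E) : Hp (0, e) = p (ContinuousMap.id E e) := H0 (p e)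
  have hlift (t : unitInterval) (e : E) : p (hp.liftHomotopy Hp _ hHp (t, e)) = H (t, p e) :=
    congrFun (hp.liftHomotopy_lifts Hp _ hHp) (t, e)
  have hzero (e : E) : hp.liftHomotopy Hp _ hHp (0, e) = e := hp.liftHomotopy_zero Hp _ hHp e
  refine ⟨_, hlift, fun e he t ↦ ?_⟩
  have hcont : Continuous fun s : unitInterval ↦ hp.liftHomotopy Hp _ hHp (s, e) :=
    (ContinuousMap.continuous _).comp (Continuous.prodMk_left e)
  have hconst (s s' : unitInterval) :
      p (hp.liftHomotopy Hp _ hHp (s, e)) = p (hp.liftHomotopy Hp _ hHp (s', e)) := by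
    rw [hlift, hlift, he, he]
  exact (hp.const_of_comp hcont hconst t 0).trans (hzero e)

lemma isPreconnected_preimage_of_deformation {E X : Type*} [TopologicalSpace E]
    [PreconnectedSpace E] [TopologicalSpace X] {q : E → X} (hq : Continuous q) {S B : Set X}
    (hS : IsClosed S) (hB : IsClosed B) (hSB : S ∪ B = univ) (hcov : IsCoveringMapOn q S)
    (H : C(unitInterval × S, S)) (H0 : ∀ x, H (0, x) = x) (H1 : ∀ x, (H (1, x) : X) ∈ B)
    (HB : ∀ x : S, ↑x ∈ B → ∀ t, H (t, x) = x) : IsPreconnected (q ⁻¹' B) := by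
  classical
  obtain ⟨Γ, hΓ, hΓB⟩ := exists_lift_of_deformation hcov.isCoveringMap_restrictPreimage H H0
  let R : E → E := fun e ↦ if h : e ∈ q ⁻¹' S then (Γ (1, ⟨e, h⟩) : E) else e
  have hRS (e : q ⁻¹' S) : R e = Γ (1, e) := dif_pos e.2
  have hRB : EqOn R id (q ⁻¹' B) := fun e he ↦ by
    by_cases h : e ∈ q ⁻¹' S
    · exact (hRS ⟨e, h⟩).trans (congrArg Subtype.val (hΓB ⟨e, h⟩ (HB _ he) 1))
    · exact dif_neg h
  have hRmem (e : E) : R e ∈ q ⁻¹' B := by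
    rcases (hSB.symm ▸ mem_univ (q e) : q e ∈ S ∪ B) with h | h
    · have hq1 : q (Γ (1, ⟨e, h⟩)) = H (1, ⟨q e, h⟩) := congrArg Subtype.val (hΓ 1 ⟨e, h⟩)
      rw [hRS ⟨e, h⟩, mem_preimage, hq1]
      exact H1 _
    · exact (hRB h).symm ▸ h
  have hRcont : Continuous R := by
    have hcontS : ContinuousOn R (q ⁻¹' S) := by
      rw [continuousOn_iff_continuous_domRestrict]
      exact (continuous_subtype_val.comp (Γ.continuous.comp (.prodMk_right 1))).congr
        fun e ↦ (hRS e).symm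
    rw [← continuousOn_univ, ← preimage_univ (f := q), ← hSB]
    exact hcontS.union_of_isClosed (continuousOn_id.congr hRB) (hS.preimage hq) (hB.preimage hq)
  have hrange : range R = q ⁻¹' B :=
    (range_subset_iff.2 hRmem).antisymm fun e he ↦ ⟨e, hRB he⟩
  exact hrange ▸ isPreconnected_range hRcont

lemma isPreconnected_preimage_closedBall {E F : Type*} [TopologicalSpace E] [PreconnectedSpace E]
    [NormedAddCommGroup F] [NormedSpace ℝ F] {q : E → F} (hq : Continuous q) {δ : ℝ} (hδ : 0 < δ)
    (hcov : IsCoveringMapOn q {z | δ ≤ ‖z‖}) : IsPreconnected (q ⁻¹' closedBall 0 δ) := by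
  have hnorm (z : {z : F | δ ≤ ‖z‖}) : 0 < ‖(z : F)‖ := hδ.trans_le z.2
  have hmem (x : unitInterval × {z : F | δ ≤ ‖z‖}) :
      δ ≤ ‖AffineMap.lineMap (k := ℝ) 1 (δ / ‖(x.2 : F)‖) (x.1 : ℝ) • (x.2 : F)‖ := by
    have hz := hnorm x.2
    have hle : δ / ‖(x.2 : F)‖ ≤ AffineMap.lineMap (k := ℝ) 1 (δ / ‖(x.2 : F)‖) (x.1 : ℝ) := by
      rw [AffineMap.lineMap_apply_ring']
      nlinarith [x.1.2.2, div_le_one_of_le₀ x.2.2 hz.le]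
    rw [norm_smul, ← div_le_iff₀ hz]
    exact hle.trans (le_abs_self _)
  let H : C(unitInterval × {z : F | δ ≤ ‖z‖}, {z : F | δ ≤ ‖z‖}) :=
    { toFun x := ⟨_, hmem x⟩
      continuous_toFun := by
        refine Continuous.subtype_mk (.smul ?_ (by fun_prop)) _
        simp only [AffineMap.lineMap_apply_ring']
        have hdiv : Continuous fun x : unitInterval × {z : F | δ ≤ ‖z‖} ↦ δ / ‖(x.2 : F)‖ :=
          continuous_const.div (by fun_prop) fun x ↦ (hnorm x.2).ne'
        fun_prop }
  have hH (t : unitInterval) (z : {z : F | δ ≤ ‖z‖}) :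
      (H (t, z) : F) = AffineMap.lineMap (k := ℝ) 1 (δ / ‖(z : F)‖) (t : ℝ) • (z : F) := rfl
  refine isPreconnected_preimage_of_deformation hq (isClosed_le continuous_const continuous_norm)
    isClosed_closedBall (eq_univ_of_forall fun z ↦ ?_) hcov H (fun z ↦ ?_) (fun z ↦ ?_)
    fun z hz t ↦ ?_
  · simpa using le_total δ ‖z‖
  · ext; simp [hH]
  · simp [hH, norm_smul, abs_of_pos hδ, (hnorm z).ne']
  · have hz' : ‖(z : F)‖ = δ := (mem_closedBall_zero_iff.1 hz).antisymm z.2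
    ext; simp [hH, hz', hδ.ne']

lemma isPreconnected_preimage_of_subset {E X : Type*} [TopologicalSpace E] [TopologicalSpace X]
    {q : E → X} (ho : IsOpenMap q) (hc : IsClosedMap q) {D W : Set X}
    (hDW : D ⊆ W) (hD : D.Nonempty) (hW : IsPreconnected W) (hqD : IsPreconnected (q ⁻¹' D)) :
    IsPreconnected (q ⁻¹' W) := by
  have : PreconnectedSpace W := isPreconnected_iff_preconnectedSpace.1 hW
  have hqD' : IsPreconnected ((↑) ⁻¹' (q ⁻¹' D) : Set (q ⁻¹' W)) := by
    rwa [← IsInducing.subtypeVal.isPreconnected_image, Subtype.image_preimage_coe,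
      inter_eq_right.2 (preimage_mono hDW)]
  have hmeet {P : Set (q ⁻¹' W)} (hP : IsClopen P) (hPne : P.Nonempty) :
      ∃ x ∈ P, q x ∈ D := by
    have himage : W.restrictPreimage q '' P = univ :=
      IsClopen.eq_univ ⟨hc.restrictPreimage W _ hP.1, ho.restrictPreimage W _ hP.2⟩ (hPne.image _)
    obtain ⟨d, hd⟩ := hD
    obtain ⟨x, hx, hxd⟩ := himage.ge (mem_univ (⟨d, hDW hd⟩ : W))
    have hqx : q x = d := congrArg Subtype.val hxd
    exact ⟨x, hx, hqx ▸ hd⟩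
  rw [isPreconnected_iff_preconnectedSpace, preconnectedSpace_iff_clopen]
  intro P hP
  by_contra! ⟨hne, hne'⟩
  obtain ⟨x, hx, hxD⟩ := hmeet hP hne
  obtain ⟨y, hy, hyD⟩ := hmeet hP.compl (nonempty_compl.2 hne')
  exact hy (hqD'.subset_isClopen hP ⟨x, hxD, hx⟩ hyD)

lemma isPreconnected_iInter_of_directed {ι X : Type*} [Nonempty ι] [TopologicalSpace X]
    [T2Space X] {s : ι → Set X} (hs : Directed (· ⊇ ·) s) (hcomp : ∀ i, IsCompact (s i))
    (hconn : ∀ i, IsPreconnected (s i)) : IsPreconnected (⋂ i, s i) := by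
  have hclosed : IsClosed (⋂ i, s i) := isClosed_iInter fun i ↦ (hcomp i).isClosed
  have hcompact : IsCompact (⋂ i, s i) :=
    (hcomp (Classical.arbitrary ι)).of_isClosed_subset hclosed (iInter_subset _ _)
  rw [isPreconnected_iff_subset_of_fully_disjoint_closed hclosed]
  intro u v hu hv huv hdisj
  obtain ⟨u', v', hu', hv', hsu, hsv, hdisj'⟩ := SeparatedNhds.of_isCompact_isCompact
    (hcompact.inter_right hu) (hcompact.inter_right hv) (hdisj.mono inf_le_right inf_le_right)
  have hcover : ⋂ i, s i ⊆ u' ∪ v' := fun x hx ↦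
    (huv hx).imp (fun h ↦ hsu ⟨hx, h⟩) fun h ↦ hsv ⟨hx, h⟩
  obtain ⟨i, hi⟩ := exists_subset_nhds_of_isCompact' hs hcomp (fun i ↦ (hcomp i).isClosed)
    fun x hx ↦ (hu'.union hv').mem_nhds (hcover hx)
  refine ((hconn i).subset_or_subset hu' hv' hdisj' hi).imp (fun h x hx ↦ ?_) fun h x hx ↦ ?_
  · exact (huv hx).resolve_right fun hxv ↦
      disjoint_left.1 hdisj' (h (mem_iInter.1 hx i)) (hsv ⟨hx, hxv⟩)
  · exact (huv hx).resolve_left fun hxu ↦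
      disjoint_left.1 hdisj' (hsu ⟨hx, hxu⟩) (h (mem_iInter.1 hx i))

end Connectedness

section BranchedCover

/-- The map `f : X → V` is a finite branched cover: a proper holomorphic surjection with finite
fibres between open subsets of `ℂ`. As `f` is a total function, properness is expressed by
the traces on `X` of preimages of compact subsets of `V`. -/
structure IsFiniteBranchedCover (f : ℂ → ℂ) (X V : Set ℂ) : Prop where
  isOpen_source : IsOpen X
  isOpen_target : IsOpen V
  differentiableOn : DifferentiableOn ℂ f X
  mapsTo : MapsTo f X V
  surjOn : SurjOn f X V
  finite_fiber : ∀ w ∈ V, (X ∩ f ⁻¹' {w}).Finite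
  isCompact_inter_preimage : ∀ C, IsCompact C → C ⊆ V → IsCompact (X ∩ f ⁻¹' C)

namespace IsFiniteBranchedCover

variable {f g : ℂ → ℂ} {U V X : Set ℂ}

lemma comp (hg : IsFiniteBranchedCover g U V) (hf : IsFiniteBranchedCover f X V) (hUV : U ⊆ V) :
    IsFiniteBranchedCover (g ∘ f) (X ∩ f ⁻¹' U) V where
  isOpen_source :=
    hf.differentiableOn.continuousOn.isOpen_inter_preimage hf.isOpen_source hg.isOpen_source
  isOpen_target := hg.isOpen_target
  differentiableOn :=
    hg.differentiableOn.comp (hf.differentiableOn.mono inter_subset_left) fun _ hz ↦ hz.2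
  mapsTo _ hz := hg.mapsTo hz.2
  surjOn w hw := by
    obtain ⟨y, hyU, rfl⟩ := hg.surjOn hw
    obtain ⟨z, hzX, rfl⟩ := hf.surjOn (hUV hyU)
    exact ⟨z, ⟨hzX, hyU⟩, rfl⟩
  finite_fiber w hw := by
    refine ((hg.finite_fiber w hw).biUnion fun y hy ↦ hf.finite_fiber y (hUV hy.1)).subset ?_
    exact fun z hz ↦ mem_biUnion (x := f z) ⟨hz.1.2, hz.2⟩ ⟨hz.1.1, rfl⟩
  isCompact_inter_preimage C hC hCV := by
    rw [preimage_comp, inter_assoc, ← preimage_inter]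
    exact hf.isCompact_inter_preimage _ (hg.isCompact_inter_preimage C hC hCV)
      (inter_subset_left.trans hUV)

lemma eventually_ne (hf : IsFiniteBranchedCover f X V) {a : ℂ} (ha : a ∈ X) :
    ∀ᶠ z in 𝓝[≠] a, f z ≠ f a := by
  have hfin : ((X ∩ f ⁻¹' {f a}) \ {a}).Finite := (hf.finite_fiber _ (hf.mapsTo ha)).sdiff
  have hnhds : ((X ∩ f ⁻¹' {f a}) \ {a})ᶜ ∈ 𝓝 a :=
    hfin.isClosed.compl_mem_nhds fun h ↦ h.2 rfl
  filter_upwards [mem_nhdsWithin_of_mem_nhds hnhds, self_mem_nhdsWithin,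
    mem_nhdsWithin_of_mem_nhds (hf.isOpen_source.mem_nhds ha)] with z hz hza hzX hfz
  exact hz ⟨⟨hzX, hfz⟩, hza⟩

lemma isOpenMap_restrict (hf : IsFiniteBranchedCover f X V) :
    IsOpenMap (hf.mapsTo.restrict f X V) :=
  (isOpenMap_domRestrict_of_eventually_ne hf.isOpen_source hf.differentiableOn
    fun _ ↦ hf.eventually_ne).codRestrict fun x ↦ hf.mapsTo x.2

lemma image_val_preimage_restrict (hf : IsFiniteBranchedCover f X V) (A : Set V) :
    (↑) '' (hf.mapsTo.restrict f X V ⁻¹' A) = X ∩ f ⁻¹' ((↑) '' A) := by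
  ext z
  constructor
  · rintro ⟨x, hx, rfl⟩
    exact ⟨x.2, _, hx, rfl⟩
  · rintro ⟨hzX, w, hwA, hwz⟩
    refine ⟨⟨z, hzX⟩, ?_, rfl⟩
    rwa [mem_preimage, show hf.mapsTo.restrict f X V ⟨z, hzX⟩ = w from Subtype.ext hwz.symm]

lemma isPreconnected_preimage_restrict_iff (hf : IsFiniteBranchedCover f X V) {A : Set V} :
    IsPreconnected (hf.mapsTo.restrict f X V ⁻¹' A) ↔ IsPreconnected (X ∩ f ⁻¹' ((↑) '' A)) := by
  rw [← IsInducing.subtypeVal.isPreconnected_image, hf.image_val_preimage_restrict]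

lemma isProperMap_restrict (hf : IsFiniteBranchedCover f X V) :
    IsProperMap (hf.mapsTo.restrict f X V) := by
  have : LocallyCompactSpace V := hf.isOpen_target.locallyCompactSpace
  rw [isProperMap_iff_isCompact_preimage]
  refine ⟨hf.differentiableOn.continuousOn.mapsToRestrict hf.mapsTo, fun C hC ↦ ?_⟩
  rw [Subtype.isCompact_iff, hf.image_val_preimage_restrict]
  exact hf.isCompact_inter_preimage _ (hC.image continuous_subtype_val) (by simp)

lemma finite_preimage_restrict (hf : IsFiniteBranchedCover f X V) (w : V) :
    (hf.mapsTo.restrict f X V ⁻¹' {w}).Finite := by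
  refine Finite.of_finite_image ?_ Subtype.val_injective.injOn
  rw [hf.image_val_preimage_restrict, image_singleton]
  exact hf.finite_fiber w w.2

lemma isLocalHomeomorphOn_restrict (hf : IsFiniteBranchedCover f X V) :
    IsLocalHomeomorphOn (hf.mapsTo.restrict f X V) {x | deriv f x ≠ 0} := by
  have hlocal : IsLocalHomeomorphOn f {z ∈ X | deriv f z ≠ 0} := .mk f _ fun z hz ↦ by
    have hderiv : HasStrictDerivAt f (deriv f z) z :=
      (hf.differentiableOn.analyticOnNhd hf.isOpen_source z hz.1).hasStrictDerivAt
    exact ⟨(hderiv.hasStrictFDerivAt_equiv hz.2).toOpenPartialHomeomorph f,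
      HasStrictFDerivAt.mem_toOpenPartialHomeomorph_source _, fun _ _ ↦ rfl⟩
  have hval (s : Set ℂ) (hs : IsOpen s) (A : Set s) :
      IsLocalHomeomorphOn ((↑) : s → ℂ) A :=
    hs.isOpenEmbedding_subtypeVal.isLocalHomeomorph.isLocalHomeomorphOn.mono (subset_univ _)
  refine .of_comp_left (g := ((↑) : V → ℂ)) ?_ (hval V hf.isOpen_target _)
    fun x _ ↦ hf.isProperMap_restrict.continuous.continuousAt
  exact hlocal.comp (hval X hf.isOpen_source _) fun x hx ↦ ⟨x.2, hx⟩

lemma isPreconnected_inter_preimage_of_subset (hf : IsFiniteBranchedCover f X V) {D W : Set ℂ}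
    (hDW : D ⊆ W) (hWV : W ⊆ V) (hD : D.Nonempty) (hW : IsPreconnected W)
    (hfD : IsPreconnected (X ∩ f ⁻¹' D)) : IsPreconnected (X ∩ f ⁻¹' W) := by
  lift W to Set V using hWV
  lift D to Set V using hDW.trans (by simp)
  rw [IsInducing.subtypeVal.isPreconnected_image] at hW
  rw [← hf.isPreconnected_preimage_restrict_iff] at hfD ⊢
  exact isPreconnected_preimage_of_subset hf.isOpenMap_restrict
    hf.isProperMap_restrict.isClosedMap ((image_subset_image_iff Subtype.val_injective).1 hDW)
    hD.of_image hW hfD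

lemma isPreconnected_inter_preimage_closedBall {E : Type*} [NormedAddCommGroup E]
    [NormedSpace ℝ E] (hf : IsFiniteBranchedCover f X V) (hX : IsPreconnected X) (e : V ≃ₜ E)
    {δ : ℝ} (hδ : 0 < δ)
    (hcrit : ∀ x : X, deriv f x = 0 → ‖e (hf.mapsTo.restrict f X V x)‖ < δ) :
    IsPreconnected (X ∩ f ⁻¹' ((↑) '' (e ⁻¹' closedBall 0 δ))) := by
  have : PreconnectedSpace X := isPreconnected_iff_preconnectedSpace.1 hX
  rw [← hf.isPreconnected_preimage_restrict_iff, ← preimage_comp]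
  refine isPreconnected_preimage_closedBall
    (e.continuous.comp hf.isProperMap_restrict.continuous) hδ ?_
  have hclosed := e.isClosedMap.comp hf.isProperMap_restrict.isClosedMap
  refine hclosed.isCoveringMapOn_of_isLocalHomeomorphOn (fun w _ ↦ ?_) ?_
  · rw [preimage_comp, ← e.image_symm, image_singleton]
    exact hf.finite_preimage_restrict _
  · have he : IsLocalHomeomorphOn e univ := e.isLocalHomeomorph.isLocalHomeomorphOn
    exact he.comp (hf.isLocalHomeomorphOn_restrict.mono fun x hx h0 ↦ (hcrit x h0).not_ge hx)
      (mapsTo_univ _ _)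

end IsFiniteBranchedCover

lemma exists_isCompact_forall_isPreconnected_inter_preimage {K U V : Set ℂ} (hUo : IsOpen U)
    (hVo : IsOpen V) (hU : IsSimplyConnected U) (hV : IsSimplyConnected V) (hUV : U ⊆ V)
    (hK : IsCompact K) (hKU : K ⊆ U) :
    ∃ B, IsCompact B ∧ B.Nonempty ∧ K ⊆ B ∧ B ⊆ U ∧
      ∀ f X, IsFiniteBranchedCover f X V → IsPreconnected X →
        (∀ z ∈ X, deriv f z = 0 → f z ∈ K) → IsPreconnected (X ∩ f ⁻¹' B) := by
  obtain ⟨eU⟩ := nonempty_homeomorph_complex hUo hU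
  obtain ⟨eV⟩ := nonempty_homeomorph_complex hVo hV
  obtain ⟨e, δ, hδ, heK, heU⟩ := exists_homeomorph_closedBall_subset hUo hUV eU eV hK hKU
  refine ⟨(↑) '' (e ⁻¹' closedBall 0 δ), ?_, ?_, fun z hz ↦ ?_, ?_, fun f X hf hX hcrit ↦ ?_⟩
  · exact (e.isCompact_preimage.2 (isCompact_closedBall 0 δ)).image continuous_subtype_val
  · exact ((nonempty_closedBall.2 hδ.le).preimage e.surjective).image _
  · have hzV : z ∈ V := hUV (hKU hz)
    exact ⟨⟨z, hzV⟩, mem_closedBall_zero_iff.2 (heK ⟨z, hzV⟩ hz).le, rfl⟩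
  · rintro _ ⟨z, hz, rfl⟩
    exact heU z (mem_closedBall_zero_iff.1 hz)
  · exact hf.isPreconnected_inter_preimage_closedBall hX e hδ fun x hx ↦ heK _ (hcrit x x.2 hx)

end BranchedCover

section FilledJulia

variable {g : ℂ → ℂ} {U V : Set ℂ}

/-- The domain of definition of `g^[n + 1]` for a map `g : U → V`: the points whose first `n`
iterates remain in `U`. These domains decrease to the filled Julia set. -/
def iterateDomain (g : ℂ → ℂ) (U : Set ℂ) (n : ℕ) : Set ℂ :=
  {z | ∀ k ≤ n, g^[k] z ∈ U}

@[simp]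
lemma iterateDomain_zero (g : ℂ → ℂ) (U : Set ℂ) : iterateDomain g U 0 = U := by
  simp [iterateDomain]

lemma iterateDomain_succ (g : ℂ → ℂ) (U : Set ℂ) (n : ℕ) :
    iterateDomain g U (n + 1) = iterateDomain g U n ∩ g^[n + 1] ⁻¹' U := by
  ext z
  simp [iterateDomain, Nat.le_succ_iff, or_imp, forall_and]

lemma iterate_mem_polyLikeFilledJulia {z : ℂ} (hz : z ∈ polyLikeFilledJulia g U) (n : ℕ) :
    g^[n] z ∈ polyLikeFilledJulia g U := fun m ↦ by
  rw [← iterate_add_apply]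
  exact hz _

lemma mem_polyLikeFilledJulia_of_iterate_mem {n : ℕ} {z : ℂ} (hz : z ∈ iterateDomain g U n)
    (hgz : g^[n + 1] z ∈ polyLikeFilledJulia g U) : z ∈ polyLikeFilledJulia g U := fun m ↦ by
  rcases le_or_gt m n with hmn | hmn
  · exact hz m hmn
  · obtain ⟨k, rfl⟩ := Nat.exists_eq_add_of_le' hmn
    rw [iterate_add_apply]
    exact hgz k

lemma polyLikeFilledJulia_subset_inter_preimage (g : ℂ → ℂ) (U : Set ℂ) :
    polyLikeFilledJulia g U ⊆ U ∩ g ⁻¹' U :=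
  fun _ hz ↦ ⟨hz 0, hz 1⟩

lemma polyLikeFilledJulia_eq_iInter {B : Set ℂ} (hB : U ∩ g ⁻¹' U ⊆ B) :
    polyLikeFilledJulia g U = ⋂ n, iterateDomain g U n ∩ g^[n + 1] ⁻¹' B := by
  refine Subset.antisymm (fun z hz ↦ mem_iInter.2 fun n ↦ ⟨fun k _ ↦ hz k, hB ?_⟩)
    fun z hz m ↦ (mem_iInter.1 hz m).1 m le_rfl
  exact polyLikeFilledJulia_subset_inter_preimage g U (iterate_mem_polyLikeFilledJulia hz _)

lemma antitone_iterateDomain_inter_preimage {B : Set ℂ} (hB : U ∩ g ⁻¹' U ⊆ B) (hBU : B ⊆ U) :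
    Antitone fun n ↦ iterateDomain g U n ∩ g^[n + 1] ⁻¹' B := by
  refine antitone_nat_of_succ_le fun n z hz ↦ ?_
  have hz' := iterateDomain_succ g U n ▸ hz.1
  refine ⟨hz'.1, hB ⟨hz'.2, hBU ?_⟩⟩
  rw [← iterate_succ_apply' g]
  exact hz.2

lemma IsFiniteBranchedCover.iterate (hg : IsFiniteBranchedCover g U V) (hUV : U ⊆ V) (n : ℕ) :
    IsFiniteBranchedCover g^[n + 1] (iterateDomain g U n) V := by
  induction n with
  | zero => simpa using hg
  | succ n ih =>
    rw [iterateDomain_succ, iterate_succ']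
    exact hg.comp ih hUV

lemma IsFiniteBranchedCover.mem_polyLikeFilledJulia_of_deriv_iterate_eq_zero
    (hg : IsFiniteBranchedCover g U V) (hUV : U ⊆ V)
    (hcrit : {z ∈ U | deriv g z = 0} ⊆ polyLikeFilledJulia g U) {n : ℕ} {z : ℂ}
    (hz : z ∈ iterateDomain g U n) (hd : deriv g^[n + 1] z = 0) : z ∈ polyLikeFilledJulia g U := by
  induction n with
  | zero => exact hcrit (by simp_all)
  | succ n ih =>
    have hgn := hg.iterate hUV n
    rw [iterateDomain_succ] at hz
    rw [iterate_succ', deriv_comp z (hg.differentiableOn.differentiableAt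
      (hg.isOpen_source.mem_nhds hz.2)) (hgn.differentiableOn.differentiableAt
      (hgn.isOpen_source.mem_nhds hz.1)), mul_eq_zero] at hd
    rcases hd with hd | hd
    · exact mem_polyLikeFilledJulia_of_iterate_mem hz.1 (hcrit ⟨hz.2, hd⟩)
    · exact ih hz.1 hd

lemma IsFiniteBranchedCover.isPreconnected_iterateDomain (hg : IsFiniteBranchedCover g U V)
    (hU : IsPreconnected U) (hUV : U ⊆ V) {B : Set ℂ} (hBU : B ⊆ U) (hB : B.Nonempty)
    (hgB : ∀ n, IsPreconnected (iterateDomain g U n) →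
      IsPreconnected (iterateDomain g U n ∩ g^[n + 1] ⁻¹' B)) (n : ℕ) :
    IsPreconnected (iterateDomain g U n) := by
  induction n with
  | zero => simpa using hU
  | succ n ih =>
    rw [iterateDomain_succ]
    exact (hg.iterate hUV n).isPreconnected_inter_preimage_of_subset hBU hUV hB hU (hgB n ih)

lemma IsFiniteBranchedCover.isConnected_polyLikeFilledJulia (hg : IsFiniteBranchedCover g U V)
    (hU : IsPreconnected U) (hUV : U ⊆ V) {B : Set ℂ} (hBcomp : IsCompact B) (hBne : B.Nonempty)
    (hB : U ∩ g ⁻¹' U ⊆ B) (hBU : B ⊆ U)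
    (hgB : ∀ n, IsPreconnected (iterateDomain g U n) →
      IsPreconnected (iterateDomain g U n ∩ g^[n + 1] ⁻¹' B)) :
    IsConnected (polyLikeFilledJulia g U) := by
  have hconn (n : ℕ) : IsPreconnected (iterateDomain g U n ∩ g^[n + 1] ⁻¹' B) :=
    hgB n (hg.isPreconnected_iterateDomain hU hUV hBU hBne hgB n)
  have hcomp (n : ℕ) : IsCompact (iterateDomain g U n ∩ g^[n + 1] ⁻¹' B) :=
    (hg.iterate hUV n).isCompact_inter_preimage B hBcomp (hBU.trans hUV)
  have hne (n : ℕ) : (iterateDomain g U n ∩ g^[n + 1] ⁻¹' B).Nonempty := by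
    obtain ⟨b, hb⟩ := hBne
    obtain ⟨z, hz, rfl⟩ := (hg.iterate hUV n).surjOn (hUV (hBU hb))
    exact ⟨z, hz, hb⟩
  have hanti := (antitone_iterateDomain_inter_preimage hB hBU).directed_ge
  rw [polyLikeFilledJulia_eq_iInter hB]
  exact ⟨IsCompact.nonempty_iInter_of_directed_nonempty_isCompact_isClosed _ hanti hne hcomp
    fun n ↦ (hcomp n).isClosed, isPreconnected_iInter_of_directed hanti hcomp hconn⟩

end FilledJulia

/-- A polynomial-like map `g : U → V` of degree `d ≥ 2` whose filled Julia set
contains all of its critical points has connected filled Julia set. -/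
theorem polyLike_filledJulia_connected (g : ℂ → ℂ) (U V : Set ℂ)
    (hUo : IsOpen U) (hVo : IsOpen V)
    (hUsimply : SimplyConnectedSpace U) (hVsimply : SimplyConnectedSpace V)
    (hUV : closure U ⊆ V) (hUcpt : IsCompact (closure U))
    (hhol : DifferentiableOn ℂ g U) (hmaps : Set.MapsTo g U V)
    (hproper : ∀ C : Set ℂ, IsCompact C → C ⊆ V → IsCompact (U ∩ g ⁻¹' C))
    (d : ℕ) (hd : 2 ≤ d)
    (hdeg : ∀ w ∈ V, 1 ≤ (U ∩ g ⁻¹' {w}).ncard ∧ (U ∩ g ⁻¹' {w}).ncard ≤ d)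
    (hcrit : {z ∈ U | deriv g z = 0} ⊆ polyLikeFilledJulia g U) :
    IsConnected (polyLikeFilledJulia g U) := by
  have hUV' : U ⊆ V := subset_closure.trans hUV
  have hg : IsFiniteBranchedCover g U V :=
    { isOpen_source := hUo
      isOpen_target := hVo
      differentiableOn := hhol
      mapsTo := hmaps
      surjOn := fun w hw ↦ nonempty_of_ncard_ne_zero (Nat.one_le_iff_ne_zero.1 (hdeg w hw).1)
      finite_fiber := fun w hw ↦ finite_of_ncard_pos (hdeg w hw).1
      isCompact_inter_preimage := hproper }
  obtain ⟨B, hBcomp, hBne, hKB, hBU, hB⟩ := exists_isCompact_forall_isPreconnected_inter_preimage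
    hUo hVo hUsimply hVsimply hUV' (hproper _ hUcpt hUV) inter_subset_left
  have hgUB : U ∩ g ⁻¹' U ⊆ B := fun z hz ↦ hKB ⟨hz.1, subset_closure hz.2⟩
  have hU : IsPreconnected U := IsSimplyConnected.isPathConnected hUsimply |>.isConnected.2
  refine hg.isConnected_polyLikeFilledJulia hU hUV' hBcomp hBne hgUB hBU fun n hX ↦ ?_
  refine hB _ _ (hg.iterate hUV' n) hX fun z hz hz0 ↦ ?_
  have hJ : g^[n + 1] z ∈ polyLikeFilledJulia g U := iterate_mem_polyLikeFilledJulia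
    (hg.mem_polyLikeFilledJulia_of_deriv_iterate_eq_zero hUV' hcrit hz hz0) _
  exact ⟨hJ 0, subset_closure (hJ 1)⟩
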